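/- Fix A ∈ ℛ. Let X ≥ 0 be a random vector in ℝ^d with distribution F and E‖X‖ < ∞, let c, c* ∈ ℝ^d satisfy c* ≥ c > 0 componentwise, and assume Θ := ∫₀^∞ ℙ(X ≥ v·c) dv > 0 and Θ* := ∫₀^∞ ℙ(X ≥ v·c*) dv > 0. Let F_{I,A} and F*_{I,A} be the integrated-tail distributions formed with c and with c*, respectively. If F_{I,A} is subexponential, then F*_{I,A} is subexponential; if F_{I,A} is long-tailed, then F*_{I,A} is long-tailed. -/

import Mathlib

open MeasureTheory ProbabilityTheory Filter Set Topology
open scoped Pointwise ENNReal NNReal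

/-- A set `A ⊆ ℝ^d` is increasing if `a ∈ A` and `y ≥ 0` imply `a + y ∈ A`. -/
def IncreasingSet {d : ℕ} (A : Set (Fin d → ℝ)) : Prop :=
  ∀ a ∈ A, ∀ y : Fin d → ℝ, 0 ≤ y → a + y ∈ A

/-- The family `ℛ` of proper open increasing subsets of `ℝ^d` with convex complement
whose closure does not contain the origin. -/
def MemR {d : ℕ} (A : Set (Fin d → ℝ)) : Prop :=
  A ≠ Set.univ ∧ IsOpen A ∧ IncreasingSet A ∧ Convex ℝ Aᶜ ∧ (0 : Fin d → ℝ) ∉ closure A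

/-- The translate `A + w = {a + w : a ∈ A}`. -/
def shiftSet {d : ℕ} (A : Set (Fin d → ℝ)) (w : Fin d → ℝ) : Set (Fin d → ℝ) :=
  (fun a => a + w) '' A

/-- The tail `V̄(x) = V((x,∞))` of a measure on `ℝ`, as a real number. -/
noncomputable def tailR (V : Measure ℝ) (x : ℝ) : ℝ := (V (Set.Ioi x)).toReal

/-- A probability distribution on `ℝ` is long-tailed if its tail is everywhere positive and
`V̄(x-y)/V̄(x) → 1` as `x → ∞`, for every `y > 0`. -/
def IsLongTailed (V : Measure ℝ) : Prop :=
  (∀ x : ℝ, 0 < V (Set.Ioi x)) ∧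
    ∀ y : ℝ, 0 < y → Tendsto (fun x => tailR V (x - y) / tailR V x) atTop (nhds 1)

/-- The (additive) convolution of two measures on `ℝ`. -/
noncomputable def convAdd (μ ν : Measure ℝ) : Measure ℝ :=
  (μ.prod ν).map (fun p => p.1 + p.2)

/-- A probability distribution on `ℝ` is subexponential if it is supported on `[0,∞)`, its tail
is everywhere positive, and `(V∗V)((x,∞))/V̄(x) → 2` as `x → ∞`. -/
def IsSubexponential (V : Measure ℝ) : Prop :=
  V (Set.Iio 0) = 0 ∧ (∀ x : ℝ, 0 < V (Set.Ioi x)) ∧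
    Tendsto (fun x => (convAdd V V (Set.Ioi x)).toReal / tailR V x) atTop (nhds 2)

/-- A probability distribution on `ℝ` is dominatedly varying if its tail is everywhere positive
and `limsup_{x→∞} V̄(bx)/V̄(x) < ∞` for every `b ∈ (0,1)`. -/
def IsDomVarying (V : Measure ℝ) : Prop :=
  (∀ x : ℝ, 0 < V (Set.Ioi x)) ∧
    ∀ b : ℝ, b ∈ Set.Ioo (0 : ℝ) 1 →
      IsBoundedUnder (· ≤ ·) atTop (fun x => tailR V (b * x) / tailR V x)

/-- `Y_A(z) = sup{u > 0 : z ∈ u·A}` (with `sup ∅ = 0`). -/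
noncomputable def YofA {d : ℕ} (A : Set (Fin d → ℝ)) (z : Fin d → ℝ) : ℝ :=
  sSup {u : ℝ | 0 < u ∧ z ∈ u • A}

/-- `V` is the integrated-tail distribution `F_{I,A}` of the claim vector `X` (with law `F`
under `P`), formed with the vector `c` and normalizing constant `Θ`: it is a probability
measure on `ℝ` whose tail is `min(1, H(x)/Θ)` for `x > 0`, where
`H(x) = ∫₀^∞ ℙ(X ∈ x·A + v·c) dv`, and equals `1` for `x ≤ 0`. -/
def IsIntegratedTail {d : ℕ} {Ω : Type*} [MeasurableSpace Ω] (P : Measure Ω)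
    (X : Ω → Fin d → ℝ) (A : Set (Fin d → ℝ)) (c : Fin d → ℝ) (Θ : ℝ)
    (V : Measure ℝ) : Prop :=
  IsProbabilityMeasure V ∧
    (∀ x : ℝ, 0 < x →
      tailR V x =
        min 1 ((∫ v in Set.Ioi (0 : ℝ), (P (X ⁻¹' shiftSet (x • A) (v • c))).toReal) / Θ)) ∧
    (∀ x : ℝ, x ≤ 0 → V (Set.Ioi x) = 1)


theorem aux_meas (h x : ℝ) :
    MeasurableSet {p : ℝ × ℝ | h < p.1 ∧ h < p.2 ∧ x < p.1 + p.2} := by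
  have a : IsOpen {p : ℝ × ℝ | h < p.1} := isOpen_lt (by fun_prop) (by fun_prop)
  have b : IsOpen {p : ℝ × ℝ | h < p.2} := isOpen_lt (by fun_prop) (by fun_prop)
  have c : IsOpen {p : ℝ × ℝ | x < p.1 + p.2} := isOpen_lt (by fun_prop) (by fun_prop)
  exact (a.inter (b.inter c)).measurableSet

theorem aux_mono_ae (μ : Measure (ℝ × ℝ)) [IsFiniteMeasure μ] {s t : Set (ℝ × ℝ)}
    (h : s ≤ᵐ[μ] t) : μ.real s ≤ μ.real t :=
  ENNReal.toReal_mono (measure_ne_top _ _) (measure_mono_ae h)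

/-- comparison of products over a joint-exceedance set, second factor -/
theorem aux_prod_right (μ V W : Measure ℝ) [SFinite μ] [SFinite V] [SFinite W] (h x : ℝ)
    (K : ℝ≥0∞) (hK : ∀ t, h ≤ t → W (Ioi t) ≤ K * V (Ioi t)) :
    (μ.prod W) {p | h < p.1 ∧ h < p.2 ∧ x < p.1 + p.2} ≤
      K * (μ.prod V) {p | h < p.1 ∧ h < p.2 ∧ x < p.1 + p.2} := by
  have hm : MeasurableSet {p : ℝ × ℝ | h < p.1 ∧ h < p.2 ∧ x < p.1 + p.2} :=
    aux_meas h x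
  rw [Measure.prod_apply hm, Measure.prod_apply hm, ← lintegral_const_mul _ (measurable_measure_prodMk_left hm)]
  apply lintegral_mono
  intro u
  dsimp only
  by_cases hu : h < u
  · have : Prod.mk u ⁻¹' {p : ℝ × ℝ | h < p.1 ∧ h < p.2 ∧ x < p.1 + p.2} = Ioi (max h (x - u)) := by
      ext v
      simp only [mem_preimage, mem_ofPred_eq, mem_Ioi, max_lt_iff, sub_lt_iff_lt_add', hu, true_and]
    rw [this]
    exact hK _ (le_max_left _ _)
  · have : Prod.mk u ⁻¹' {p : ℝ × ℝ | h < p.1 ∧ h < p.2 ∧ x < p.1 + p.2} = ∅ := by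
      ext v
      simp [hu]
    rw [this]; simp

theorem aux_prod_left (μ V W : Measure ℝ) [SFinite μ] [SFinite V] [SFinite W] (h x : ℝ)
    (K : ℝ≥0∞) (hK : ∀ t, h ≤ t → W (Ioi t) ≤ K * V (Ioi t)) :
    (W.prod μ) {p | h < p.1 ∧ h < p.2 ∧ x < p.1 + p.2} ≤
      K * (V.prod μ) {p | h < p.1 ∧ h < p.2 ∧ x < p.1 + p.2} := by
  have hm : MeasurableSet {p : ℝ × ℝ | h < p.1 ∧ h < p.2 ∧ x < p.1 + p.2} :=
    aux_meas h x
  have key : ∀ U : Measure ℝ, SFinite U → (U.prod μ) {p | h < p.1 ∧ h < p.2 ∧ x < p.1 + p.2} =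
      (μ.prod U) {p | h < p.1 ∧ h < p.2 ∧ x < p.1 + p.2} := by
    intro U _
    rw [← Measure.prod_swap, Measure.map_apply measurable_swap hm]
    congr 1
    ext p
    simp only [mem_preimage, mem_ofPred_eq, Prod.fst_swap, Prod.snd_swap, add_comm p.2 p.1]
    tauto
  rw [key W inferInstance, key V inferInstance]
  exact aux_prod_right μ V W h x K hK

theorem aux_prod_both (V W : Measure ℝ) [IsProbabilityMeasure V] [IsProbabilityMeasure W] (h x : ℝ)
    (C : ℝ) (hC : 0 < C) (hK : ∀ t, h ≤ t → tailR W t ≤ C * tailR V t) :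
    (W.prod W).real {p | h < p.1 ∧ h < p.2 ∧ x < p.1 + p.2} ≤
      C * C * (V.prod V).real {p | h < p.1 ∧ h < p.2 ∧ x < p.1 + p.2} := by
  have hK' : ∀ t, h ≤ t → W (Ioi t) ≤ ENNReal.ofReal C * V (Ioi t) := by
    intro t ht
    have := hK t ht
    unfold tailR at this
    rw [← ENNReal.ofReal_toReal (measure_ne_top W (Ioi t)),
      ← ENNReal.ofReal_toReal (measure_ne_top V (Ioi t)), ← ENNReal.ofReal_mul hC.le]
    exact ENNReal.ofReal_le_ofReal this
  have h1 := (aux_prod_right W V W h x _ hK').trans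
    (mul_le_mul_right (aux_prod_left V V W h x _ hK') (ENNReal.ofReal C))
  have h2 := ENNReal.toReal_mono (by finiteness) h1
  rw [ENNReal.toReal_mul, ENNReal.toReal_mul, ENNReal.toReal_ofReal hC.le, ← mul_assoc] at h2
  exact h2

theorem aux_conv (V : Measure ℝ) (x : ℝ) :
    (convAdd V V (Ioi x)).toReal = (V.prod V).real {p | x < p.1 + p.2} := by
  unfold convAdd
  rw [Measure.map_apply (by fun_prop) measurableSet_Ioi]
  rfl

theorem aux_Iic (V : Measure ℝ) [IsProbabilityMeasure V] (x : ℝ) :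
    V.real (Iic x) = 1 - tailR V x := by
  have := probReal_compl_eq_one_sub (μ := V) (s := Ioi x) measurableSet_Ioi
  rw [compl_Ioi] at this
  exact this

theorem aux_nonneg (V : Measure ℝ) [IsProbabilityMeasure V] (hV : V (Iio 0) = 0) :
    ∀ᵐ p ∂(V.prod V), (0:ℝ) ≤ p.1 ∧ (0:ℝ) ≤ p.2 := by
  have h0 : ∀ᵐ v ∂V, (0:ℝ) ≤ v := by
    rw [ae_iff]; simpa [Iio] using hV
  have h1 := (Measure.quasiMeasurePreserving_fst (μ := V) (ν := V)).ae h0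
  have h2 := (Measure.quasiMeasurePreserving_snd (μ := V) (ν := V)).ae h0
  filter_upwards [h1, h2] with p a b using ⟨a, b⟩

theorem aux_tail_tendsto (V : Measure ℝ) [IsProbabilityMeasure V] :
    Tendsto (tailR V) atTop (𝓝 0) := by
  have h := tendsto_cdf_atTop V
  have h2 : tailR V = fun x => 1 - cdf V x := by
    ext x
    rw [cdf_eq_real, aux_Iic]; ring
  rw [h2]
  simpa using h.const_sub 1

theorem aux_tail_anti (V : Measure ℝ) [IsProbabilityMeasure V] : Antitone (tailR V) := by
  intro a b hab
  exact measureReal_mono (Ioi_subset_Ioi hab)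

theorem aux_tail_pos (V : Measure ℝ) [IsProbabilityMeasure V] (x : ℝ) :
    0 < tailR V x ↔ 0 < V (Ioi x) := by
  unfold tailR
  rw [ENNReal.toReal_pos_iff]
  simp [measure_lt_top]

theorem aux_long_lower (V : Measure ℝ) [IsProbabilityMeasure V] (hV : V (Iio 0) = 0)
    (x y : ℝ) (hy : 0 < y) (hx : y ≤ x) :
    tailR V x + (1 - tailR V y) * tailR V x + (tailR V y - tailR V x) * tailR V (x - y) ≤
      (convAdd V V (Ioi x)).toReal := by
  rw [aux_conv]
  have e1 : (V.prod V).real (Ioi x ×ˢ univ) = tailR V x := by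
    rw [measureReal_prod_prod]; simp [tailR, Measure.real]
  have e2 : (V.prod V).real (Iic y ×ˢ Ioi x) = (1 - tailR V y) * tailR V x := by
    rw [measureReal_prod_prod, aux_Iic]; rfl
  have e3 : (V.prod V).real (Ioc y x ×ˢ Ioi (x - y)) = (tailR V y - tailR V x) * tailR V (x-y) := by
    rw [measureReal_prod_prod]
    congr 1
    rw [← Ioi_sdiff_Ioi, measureReal_sdiff (Ioi_subset_Ioi hx) measurableSet_Ioi]
    rfl
  rw [← e3, ← e2]
  nth_rw 1 [← e1]
  rw [← measureReal_union _ (measurableSet_Iic.prod measurableSet_Ioi),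
    ← measureReal_union _ (measurableSet_Ioc.prod measurableSet_Ioi)]
  · apply aux_mono_ae
    filter_upwards [aux_nonneg V hV] with p hp hmem
    show x < p.1 + p.2
    obtain ⟨a, b⟩ := hp
    have hmem : (x < p.1 ∨ p.1 ≤ y ∧ x < p.2) ∨ (y < p.1 ∧ p.1 ≤ x) ∧ x - y < p.2 := by
      rcases hmem with (h | h) | h
      · exact Or.inl (Or.inl h.1)
      · exact Or.inl (Or.inr h)
      · exact Or.inr h
    rcases hmem with (h | h) | h <;> linarith
  · rw [disjoint_left]
    rintro p hp hq
    simp only [mem_union, mem_prod, mem_Ioi, mem_univ, and_true, mem_Iic, mem_Ioc] at hp hq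
    rcases hp with h | h <;> linarith
  · rw [disjoint_left]
    rintro p hp hq
    simp only [mem_prod, mem_Ioi, mem_univ, and_true, mem_Iic] at hp hq
    linarith

theorem sub_long (V : Measure ℝ) [IsProbabilityMeasure V] (hS : IsSubexponential V) :
    IsLongTailed V := by
  obtain ⟨hV, hpos, hlim⟩ := hS
  refine ⟨hpos, fun y hy => ?_⟩
  have hp : ∀ x, 0 < tailR V x := fun x => (aux_tail_pos V x).2 (hpos x)
  have hup : Tendsto (fun x => ((convAdd V V (Ioi x)).toReal / tailR V x - 1 - (1 - tailR V y)) /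
      (tailR V y - tailR V x)) atTop (𝓝 ((2 - 1 - (1 - tailR V y)) / (tailR V y - 0))) := by
    apply Tendsto.div
    · exact (hlim.sub_const 1).sub_const _
    · exact (aux_tail_tendsto V).const_sub _
    · simpa using (hp y).ne'
  have e : (2 - 1 - (1 - tailR V y)) / (tailR V y - 0) = 1 := by
    have := (hp y).ne'
    rw [sub_zero, div_eq_one_iff_eq this]; ring
  rw [e] at hup
  refine tendsto_of_tendsto_of_tendsto_of_le_of_le' tendsto_const_nhds hup ?_ ?_
  · filter_upwards with x
    rw [one_le_div (hp x)]
    exact aux_tail_anti V (by linarith)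
  · filter_upwards [(aux_tail_tendsto V).eventually_lt_const (hp y), eventually_ge_atTop y] with x h1 h2
    have h3 := aux_long_lower V hV x y hy h2
    have h4 := hp x
    rw [le_div_iff₀ (by linarith)]
    rw [← sub_nonneg]
    have : (convAdd V V (Ioi x)).toReal / tailR V x - 1 - (1 - tailR V y) - 
      tailR V (x - y) / tailR V x * (tailR V y - tailR V x) = 
      ((convAdd V V (Ioi x)).toReal - (tailR V x + (1 - tailR V y) * tailR V x + (tailR V y - tailR V x) * tailR V (x - y))) / tailR V x := by
      field_simp
      ring
    rw [this]
    apply div_nonneg _ h4.le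
    linarith

theorem aux_joint_upper (V : Measure ℝ) [IsProbabilityMeasure V] (hV : V (Iio 0) = 0)
    (x h : ℝ) (hx : 2 * h ≤ x) (hh : 0 < h) :
    2 * ((1 - tailR V h) * tailR V x) +
     (V.prod V).real {p | h < p.1 ∧ h < p.2 ∧ x < p.1 + p.2} ≤ (convAdd V V (Ioi x)).toReal := by
  rw [aux_conv]
  have hm : MeasurableSet {p : ℝ × ℝ | h < p.1 ∧ h < p.2 ∧ x < p.1 + p.2} :=
    aux_meas h x
  have e1 : (V.prod V).real (Ioi x ×ˢ Iic h) = (1 - tailR V h) * tailR V x := by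
    rw [measureReal_prod_prod, aux_Iic, mul_comm]; rfl
  have e2 : (V.prod V).real (Iic h ×ˢ Ioi x) = (1 - tailR V h) * tailR V x := by
    rw [measureReal_prod_prod, aux_Iic]; rfl
  rw [two_mul]
  nth_rw 1 [← e1]
  rw [← e2]
  rw [← measureReal_union _ (measurableSet_Iic.prod measurableSet_Ioi),
    ← measureReal_union _ hm]
  · apply aux_mono_ae
    filter_upwards [aux_nonneg V hV] with p hp hmem
    show x < p.1 + p.2
    obtain ⟨a, b⟩ := hp
    have hmem : (x < p.1 ∧ p.2 ≤ h ∨ p.1 ≤ h ∧ x < p.2) ∨ (h < p.1 ∧ h < p.2 ∧ x < p.1 + p.2) := by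
      rcases hmem with (h | h) | h
      · exact Or.inl (Or.inl h)
      · exact Or.inl (Or.inr h)
      · exact Or.inr h
    rcases hmem with (h | h) | h <;> linarith
  · rw [disjoint_left]
    rintro p hp hq
    simp only [mem_union, mem_prod, mem_Ioi, mem_Iic, mem_ofPred_eq] at hp hq
    rcases hp with h | h <;> linarith
  · rw [disjoint_left]
    rintro p hp hq
    simp only [mem_prod, mem_Ioi, mem_Iic] at hp hq
    linarith

theorem aux_conv_upper (W : Measure ℝ) [IsProbabilityMeasure W] (x h : ℝ) :
    (convAdd W W (Ioi x)).toReal ≤ 2 * tailR W (x - h) +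
     (W.prod W).real {p | h < p.1 ∧ h < p.2 ∧ x < p.1 + p.2} := by
  rw [aux_conv]
  have e1 : (W.prod W).real (Ioi (x-h) ×ˢ univ) = tailR W (x-h) := by
    rw [measureReal_prod_prod]; simp [tailR, Measure.real]
  have e2 : (W.prod W).real (univ ×ˢ Ioi (x-h)) = tailR W (x-h) := by
    rw [measureReal_prod_prod]; simp [tailR, Measure.real]
  rw [two_mul]
  nth_rw 1 [← e1]
  rw [← e2]
  refine (measureReal_mono ?_).trans ((measureReal_union_le _ _).trans
    (add_le_add_left (measureReal_union_le _ _) _))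
  intro p hp
  simp only [mem_union, mem_prod, mem_Ioi, mem_univ, and_true, true_and, mem_ofPred_eq] at hp ⊢
  by_cases h1 : h < p.1
  · by_cases h2 : h < p.2
    · exact Or.inr ⟨h1, h2, hp⟩
    · left; left; linarith
  · left; right; linarith

theorem sub_transfer (V W : Measure ℝ) [IsProbabilityMeasure V] [IsProbabilityMeasure W]
    (hS : IsSubexponential V) (hL : IsLongTailed W) (hW : W (Iio 0) = 0)
    (C : ℝ) (hC : 0 < C) (x0 : ℝ) (h1 : ∀ x, x0 ≤ x → tailR W x ≤ C * tailR V x)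
    (h2 : ∀ x, x0 ≤ x → tailR V x ≤ C * tailR W x) : IsSubexponential W := by
  obtain ⟨hV, hpos, hlim⟩ := hS
  have hp : ∀ x, 0 < tailR V x := fun x => (aux_tail_pos V x).2 (hpos x)
  have hq : ∀ x, 0 < tailR W x := fun x => (aux_tail_pos W x).2 (hL.1 x)
  refine ⟨hW, hL.1, ?_⟩
  rw [tendsto_order]
  constructor
  · intro a ha
    have ht := aux_tail_tendsto W
    filter_upwards [ht.eventually_lt_const (show 0 < 2 - a by linarith), eventually_gt_atTop 0] with x hx hx0
    have h3 := aux_long_lower W hW x x hx0 le_rfl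
    rw [lt_div_iff₀ (hq x)]
    nlinarith [hq x]
  · intro a ha
    have ht := (aux_tail_tendsto V).const_mul (C * C * C * 2)
    rw [mul_zero] at ht
    obtain ⟨h, hha, hh0, hhx⟩ := ((ht.eventually_lt_const (show 0 < a - 2 by linarith)).and
      ((eventually_gt_atTop 0).and (eventually_ge_atTop x0))).exists
    have hlimit : Tendsto (fun x => 2 * (tailR W (x - h) / tailR W x) +
        C * C * C * ((convAdd V V (Ioi x)).toReal / tailR V x - 2 * (1 - tailR V h))) atTop
        (𝓝 (2 * 1 + C * C * C * (2 - 2 * (1 - tailR V h)))) :=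
      ((hL.2 h hh0).const_mul 2).add ((hlim.sub_const _).const_mul _)
    filter_upwards [hlimit.eventually_lt_const (u := a) (by linarith),
      eventually_ge_atTop (2 * h), eventually_ge_atTop x0] with x hx hx2 hx3
    refine lt_of_le_of_lt ?_ hx
    have k1 := aux_conv_upper W x h
    have k2 := aux_joint_upper V hV x h hx2 hh0
    have k3 := aux_prod_both V W h x C hC (fun t ht => h1 t (hhx.trans ht))
    have k4 := h2 x hx3
    set R := (V.prod V).real {p | h < p.1 ∧ h < p.2 ∧ x < p.1 + p.2} with hR
    have hR0 : 0 ≤ R := measureReal_nonneg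
    have k5 : R / tailR V x ≤ (convAdd V V (Ioi x)).toReal / tailR V x - 2 * (1 - tailR V h) := by
      rw [div_le_iff₀ (hp x), sub_mul, div_mul_cancel₀ _ (hp x).ne']
      linarith
    have k6 : R / tailR W x ≤ C * (R / tailR V x) := by
      rw [← mul_div_assoc, div_le_div_iff₀ (hq x) (hp x)]
      nlinarith
    have k7 : (convAdd W W (Ioi x)).toReal / tailR W x ≤
        2 * (tailR W (x - h) / tailR W x) + C * C * (R / tailR W x) := by
      rw [div_le_iff₀ (hq x), add_mul, mul_assoc, mul_assoc (C*C), div_mul_cancel₀ _ (hq x).ne', div_mul_cancel₀ _ (hq x).ne']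
      linarith
    have hCC : 0 < C * C := by positivity
    have k8 := mul_le_mul_of_nonneg_left k6 hCC.le
    have k9 := mul_le_mul_of_nonneg_left k5 (show 0 ≤ C * C * C by positivity)
    linarith

theorem long_transfer (V W : Measure ℝ) [IsProbabilityMeasure V] [IsProbabilityMeasure W]
    (hL : IsLongTailed V)
    (C : ℝ) (hC : 0 < C) (x0 : ℝ) (h1 : ∀ x, x0 ≤ x → tailR W x ≤ C * tailR V x)
    (h2 : ∀ x, x0 ≤ x → tailR V x ≤ C * tailR W x)
    (h3 : ∀ t y : ℝ, 0 < t → 0 < y → ∀ᶠ x in atTop,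
      tailR W (x - t) - tailR W x ≤ t / y * tailR W (x - (t + y))) : IsLongTailed W := by
  have hp : ∀ x, 0 < tailR V x := fun x => (aux_tail_pos V x).2 (hL.1 x)
  have hq : ∀ x, 0 < tailR W x := by
    intro x
    have a := h2 (max x x0) (le_max_right _ _)
    have b := hp (max x x0)
    have c := aux_tail_anti W (le_max_left x x0)
    have d : 0 < tailR W (max x x0) := by
      by_contra hh
      nlinarith
    linarith
  refine ⟨fun x => (aux_tail_pos W x).1 (hq x), fun t ht => ?_⟩
  rw [tendsto_order]
  constructor
  · intro a ha
    filter_upwards with x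
    refine lt_of_lt_of_le ha ?_
    rw [one_le_div (hq x)]
    exact aux_tail_anti W (by linarith)
  · intro a ha
    obtain ⟨y, hy, hya⟩ : ∃ y : ℝ, 0 < y ∧ t / y * (C * C) < a - 1 := by
      refine ⟨t * (C * C) / (a - 1) + 1, ?_, ?_⟩
      · have : 0 < a - 1 := by linarith
        positivity
      · have h0 : 0 < a - 1 := by linarith
        have h5 : 0 < t * (C * C) / (a - 1) + 1 := by positivity
        rw [div_mul_eq_mul_div, div_lt_iff₀ h5, mul_add, mul_div_cancel₀ _ h0.ne']
        linarith
    have hlimit : Tendsto (fun x => 1 + t / y * (C * C) * (tailR V (x - (t + y)) / tailR V x)) atTop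
        (𝓝 (1 + t / y * (C * C) * 1)) :=
      ((hL.2 (t + y) (by positivity)).const_mul _).const_add _
    filter_upwards [hlimit.eventually_lt_const (u := a) (by linarith), h3 t y ht hy,
      eventually_ge_atTop (x0 + (t + y))] with x hx hx1 hx2
    refine lt_of_le_of_lt ?_ hx
    have k1 := h1 (x - (t + y)) (by linarith)
    have k2 := h2 x (by linarith)
    have hty : 0 < t / y := by positivity
    have k3 : tailR W (x - (t + y)) / tailR W x ≤ C * C * (tailR V (x - (t + y)) / tailR V x) := by
      rw [← mul_div_assoc, div_le_div_iff₀ (hq x) (hp x)]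
      calc tailR W (x - (t + y)) * tailR V x 
          ≤ (C * tailR V (x - (t + y))) * (C * tailR W x) :=
            mul_le_mul k1 k2 (hp x).le (mul_nonneg hC.le (hp _).le)
        _ = _ := by ring
    have k4 : tailR W (x - t) / tailR W x ≤ 1 + t / y * (tailR W (x - (t + y)) / tailR W x) := by
      rw [div_le_iff₀ (hq x), add_mul, mul_assoc, div_mul_cancel₀ _ (hq x).ne']
      linarith
    have k5 := mul_le_mul_of_nonneg_left k3 hty.le
    linarith

theorem aux_mem_shift {d : ℕ} (B : Set (Fin d → ℝ)) (z w : Fin d → ℝ) :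
    z ∈ shiftSet B w ↔ z - w ∈ B := by
  unfold shiftSet
  constructor
  · rintro ⟨a, ha, rfl⟩
    simpa using ha
  · intro h
    exact ⟨z - w, h, by simp⟩

theorem aux_up {d : ℕ} {A : Set (Fin d → ℝ)} (hA : MemR A) {x : ℝ} (hx : 0 < x)
    {z z' : Fin d → ℝ} (hz : z ∈ x • A) (hzz : z ≤ z') : z' ∈ x • A := by
  rw [mem_smul_set_iff_inv_smul_mem₀ hx.ne'] at hz ⊢
  have := hA.2.2.1 _ hz (x⁻¹ • (z' - z)) (smul_nonneg (by positivity) (sub_nonneg.2 hzz))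
  rwa [← smul_add, add_sub_cancel] at this

/-- Length of the set of `v > 0` with `z - v c ∈ x A`. -/
noncomputable def lenV {d : ℕ} (A : Set (Fin d → ℝ)) (c : Fin d → ℝ) (x : ℝ) (z : Fin d → ℝ) :
    ℝ≥0∞ := (volume.restrict (Ioi (0:ℝ))) {v | z - v • c ∈ x • A}

theorem aux_meas_line {d : ℕ} {A : Set (Fin d → ℝ)} (hA : MemR A) (c : Fin d → ℝ) {x : ℝ}
    (hx : 0 < x) (z : Fin d → ℝ) : MeasurableSet {v : ℝ | z - v • c ∈ x • A} :=
  ((hA.2.1.smul₀ hx.ne').preimage (f := fun v : ℝ => z - v • c) (by fun_prop)).measurableSet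

theorem aux_len_ge {d : ℕ} {A : Set (Fin d → ℝ)} (hA : MemR A) {c : Fin d → ℝ}
    (hc : ∀ j, 0 < c j) {x : ℝ} (hx : 0 < x) {z : Fin d → ℝ} {v : ℝ}
    (hv : z - v • c ∈ x • A) : ENNReal.ofReal v ≤ lenV A c x z := by
  unfold lenV
  rw [Measure.restrict_apply (aux_meas_line hA c hx z)]
  calc ENNReal.ofReal v = volume (Ioc 0 v) := by simp
    _ ≤ _ := by
      apply measure_mono
      intro u hu
      refine ⟨aux_up hA hx hv ?_, hu.1⟩
      intro j
      simp only [Pi.sub_apply, Pi.smul_apply, smul_eq_mul]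
      have := mul_le_mul_of_nonneg_right hu.2 (hc j).le
      linarith

theorem aux_len_le {d : ℕ} {A : Set (Fin d → ℝ)} (hA : MemR A) {c : Fin d → ℝ}
    {x : ℝ} (hx : 0 < x) {z : Fin d → ℝ} {w : ℝ}
    (hw : ∀ v, z - v • c ∈ x • A → v ≤ w) : lenV A c x z ≤ ENNReal.ofReal w := by
  unfold lenV
  rw [Measure.restrict_apply (aux_meas_line hA c hx z)]
  calc _ ≤ volume (Ioc 0 w) := by
        apply measure_mono
        rintro u ⟨h1, h2⟩
        exact ⟨h2, hw u h1⟩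
    _ = _ := by simp

theorem aux_len_convex {d : ℕ} {A : Set (Fin d → ℝ)} (hA : MemR A) {c : Fin d → ℝ}
    (hc : ∀ j, 0 < c j) {x1 x2 l m : ℝ} (hx1 : 0 < x1) (hx2 : 0 < x2) (hl : 0 < l) (hm : 0 < m)
    (hlm : l + m = 1)
    (z : Fin d → ℝ) :
    lenV A c (l * x1 + m * x2) z ≤ 
      ENNReal.ofReal l * lenV A c x1 z + ENNReal.ofReal m * lenV A c x2 z := by
  have hl' : ENNReal.ofReal l ≠ 0 := by simpa using hl
  have hm' : ENNReal.ofReal m ≠ 0 := by simpa using hm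
  by_cases t1 : lenV A c x1 z = ⊤
  · rw [t1, ENNReal.mul_top hl']; simp
  by_cases t2 : lenV A c x2 z = ⊤
  · rw [t2, ENNReal.mul_top hm']; simp
  have hxb : 0 < l * x1 + m * x2 := by positivity
  set a := (lenV A c x1 z).toReal with ha
  set b := (lenV A c x2 z).toReal with hb
  have ha0 : 0 ≤ a := ENNReal.toReal_nonneg
  have hb0 : 0 ≤ b := ENNReal.toReal_nonneg
  have key : ∀ v, z - v • c ∈ (l * x1 + m * x2) • A → v ≤ l * a + m * b := by
    intro v hv
    by_contra! hcon
    set e := (v - (l * a + m * b)) / (l + m) with he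
    have he0 : 0 < e := div_pos (by linarith) (by linarith)
    have hve : v = l * (a + e) + m * (b + e) := by
      rw [he]; field_simp; ring
    have n1 : z - (a + e) • c ∉ x1 • A := by
      intro hh
      have := ENNReal.toReal_mono t1 (aux_len_ge hA hc hx1 hh)
      rw [ENNReal.toReal_ofReal (by linarith)] at this
      linarith
    have n2 : z - (b + e) • c ∉ x2 • A := by
      intro hh
      have := ENNReal.toReal_mono t2 (aux_len_ge hA hc hx2 hh)
      rw [ENNReal.toReal_ofReal (by linarith)] at this
      linarith
    rw [mem_smul_set_iff_inv_smul_mem₀ hx1.ne'] at n1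
    rw [mem_smul_set_iff_inv_smul_mem₀ hx2.ne'] at n2
    rw [mem_smul_set_iff_inv_smul_mem₀ hxb.ne'] at hv
    have hcv := hA.2.2.2.1 n1 n2
      (show 0 ≤ l * x1 / (l * x1 + m * x2) by positivity)
      (show 0 ≤ m * x2 / (l * x1 + m * x2) by positivity) (by field_simp)
    apply hcv
    convert hv using 1
    ext j
    simp only [Pi.add_apply, Pi.sub_apply, Pi.smul_apply, smul_eq_mul]
    rw [hve]
    have hz : z j = l * z j + m * z j := by rw [← add_mul, hlm, one_mul]
    field_simp
    linear_combination (-1) * hz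
  refine (aux_len_le hA hxb key).trans ?_
  rw [ENNReal.ofReal_add (by positivity) (by positivity), ENNReal.ofReal_mul hl.le,
    ENNReal.ofReal_mul hm.le, ha, hb, ENNReal.ofReal_toReal t1, ENNReal.ofReal_toReal t2]

theorem aux_len_scale {d : ℕ} {A : Set (Fin d → ℝ)} (hA : MemR A) {c c' : Fin d → ℝ}
    {x : ℝ} (hx : 0 < x) {K : ℝ} (hK : 0 < K) (hcK : ∀ j, c' j ≤ K * c j)
    (z : Fin d → ℝ) : lenV A c x z ≤ ENNReal.ofReal K * lenV A c' x z := by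
  unfold lenV
  rw [Measure.restrict_apply (aux_meas_line hA c hx z),
    Measure.restrict_apply (aux_meas_line hA c' hx z)]
  have := Measure.addHaar_smul (volume : Measure ℝ) K ({v | z - v • c' ∈ x • A} ∩ Ioi 0)
  rw [Module.finrank_self, pow_one, abs_of_pos hK] at this
  rw [← this]
  apply measure_mono
  rintro v ⟨h1, h2⟩
  rw [mem_smul_set_iff_inv_smul_mem₀ hK.ne']
  have h2' : 0 < v := h2
  refine ⟨?_, by show 0 < K⁻¹ • v; rw [smul_eq_mul]; positivity⟩
  refine aux_up hA hx h1 ?_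
  intro j
  simp only [Pi.sub_apply, Pi.smul_apply, smul_eq_mul]
  have := mul_le_mul_of_nonneg_left (hcK j) (show 0 ≤ K⁻¹ * v by positivity)
  have e : K⁻¹ * v * (K * c j) = v * c j := by field_simp
  linarith

theorem aux_fubini {d : ℕ} {Ω : Type*} [MeasurableSpace Ω] (P : Measure Ω) [IsProbabilityMeasure P]
    {A : Set (Fin d → ℝ)} (hA : MemR A) (X : Ω → Fin d → ℝ) (hX : Measurable X)
    (c : Fin d → ℝ) {x : ℝ} (hx : 0 < x) :
    ∫ v in Ioi (0 : ℝ), (P (X ⁻¹' shiftSet (x • A) (v • c))).toReal =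
      (∫⁻ ω, lenV A c x (X ω) ∂P).toReal ∧ Measurable (fun ω => lenV A c x (X ω)) := by
  set E : Set (Ω × ℝ) := {p | X p.1 - p.2 • c ∈ x • A} with hE
  have hEm : MeasurableSet E := by
    have hf : Measurable (fun p : Ω × ℝ => X p.1 - p.2 • c) := by fun_prop
    exact hf (hA.2.1.smul₀ hx.ne').measurableSet
  have e1 : ∀ v : ℝ, X ⁻¹' shiftSet (x • A) (v • c) = (fun ω => (ω, v)) ⁻¹' E := by
    intro v
    ext ω
    exact aux_mem_shift _ _ _
  constructor
  · simp_rw [e1]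
    rw [integral_toReal (measurable_measure_prodMk_right hEm).aemeasurable
      (Eventually.of_forall fun _ => measure_lt_top _ _)]
    rw [← Measure.prod_apply_symm hEm, Measure.prod_apply hEm]
    rfl
  · exact measurable_measure_prodMk_left (ν := volume.restrict (Ioi (0:ℝ))) hEm

/-- **Remark 3.3.** Fix `A ∈ ℛ`. For `c* ≥ c > 0` componentwise and `Θ, Θ* > 0`: if the
integrated-tail distribution `F_{I,A}` (formed with `c`) is subexponential (resp. long-tailed),
then `F*_{I,A}` (formed with `c*`) is subexponential (resp. long-tailed). -/
theorem integrated_tail_class_transfer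
    {d : ℕ} {Ω : Type*} [MeasurableSpace Ω] (P : Measure Ω) [IsProbabilityMeasure P]
    (A : Set (Fin d → ℝ)) (hA : MemR A)
    (X : Ω → Fin d → ℝ) (hXmeas : Measurable X)
    (hXnonneg : ∀ ω, 0 ≤ X ω) (hXint : Integrable X P)
    (c cstar : Fin d → ℝ) (hc : ∀ j, 0 < c j) (hccstar : c ≤ cstar)
    (Θ Θstar : ℝ)
    (hΘ : Θ = ∫ v in Set.Ioi (0 : ℝ), (P {ω | v • c ≤ X ω}).toReal) (hΘpos : 0 < Θ)
    (hΘstar : Θstar = ∫ v in Set.Ioi (0 : ℝ), (P {ω | v • cstar ≤ X ω}).toReal)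
    (hΘstarpos : 0 < Θstar)
    (FIA FIAstar : Measure ℝ)
    (hFIA : IsIntegratedTail P X A c Θ FIA)
    (hFIAstar : IsIntegratedTail P X A cstar Θstar FIAstar) :
    (IsSubexponential FIA → IsSubexponential FIAstar) ∧
      (IsLongTailed FIA → IsLongTailed FIAstar) := by
  obtain ⟨hP1, hT1, hZ1⟩ := hFIA
  obtain ⟨hP2, hT2, hZ2⟩ := hFIAstar
  set H : ℝ → ℝ≥0∞ := fun x => ∫⁻ ω, lenV A c x (X ω) ∂P with hH
  set H' : ℝ → ℝ≥0∞ := fun x => ∫⁻ ω, lenV A cstar x (X ω) ∂P with hH'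
  have hc' : ∀ j, 0 < cstar j := fun j => (hc j).trans_le (hccstar j)
  have hF1 : ∀ x, 0 < x → tailR FIA x = min 1 ((H x).toReal / Θ) := by
    intro x hx
    rw [hT1 x hx, (aux_fubini P hA X hXmeas c hx).1]
  have hF2 : ∀ x, 0 < x → tailR FIAstar x = min 1 ((H' x).toReal / Θstar) := by
    intro x hx
    rw [hT2 x hx, (aux_fubini P hA X hXmeas cstar hx).1]
  set K : ℝ := 1 + ∑ j, cstar j / c j with hKdef
  have hsum : 0 ≤ ∑ j, cstar j / c j :=
    Finset.sum_nonneg fun j _ => div_nonneg (hc' j).le (hc j).le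
  have hK : 0 < K := by linarith
  have hcK : ∀ j, cstar j ≤ K * c j := by
    intro j
    rw [← div_le_iff₀ (hc j)]
    have := Finset.single_le_sum (f := fun j => cstar j / c j)
      (fun j _ => div_nonneg (hc' j).le (hc j).le) (Finset.mem_univ j)
    linarith
  have hle1 : ∀ x, 0 < x → H' x ≤ H x := by
    intro x hx
    apply lintegral_mono
    intro ω
    have := aux_len_scale hA (c := cstar) (c' := c) hx one_pos
      (fun j => by simpa using hccstar j) (X ω)
    simpa using this
  have hle2 : ∀ x, 0 < x → H x ≤ ENNReal.ofReal K * H' x := by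
    intro x hx
    rw [hH', ← lintegral_const_mul _ (aux_fubini P hA X hXmeas cstar hx).2]
    apply lintegral_mono
    intro ω
    exact aux_len_scale hA hx hK hcK (X ω)
  obtain ⟨a1, ha1⟩ := eventually_atTop.1
    ((aux_tail_tendsto FIA).eventually_lt_const zero_lt_one)
  obtain ⟨a2, ha2⟩ := eventually_atTop.1
    ((aux_tail_tendsto FIAstar).eventually_lt_const zero_lt_one)
  set x0 := max 1 (max a1 a2) with hx0
  have hx01 : 1 ≤ x0 := le_max_left _ _
  have hx02 : a1 ≤ x0 := (le_max_left _ _).trans (le_max_right _ _)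
  have hx03 : a2 ≤ x0 := (le_max_right _ _).trans (le_max_right _ _)
  have hG1 : ∀ x, x0 ≤ x → tailR FIA x = (H x).toReal / Θ := by
    intro x hx
    have h := hF1 x (by linarith)
    have h2 := ha1 x (by linarith)
    rcases min_choice 1 ((H x).toReal / Θ) with h3 | h3
    · linarith
    · rw [h, h3]
  have hG2 : ∀ x, x0 ≤ x → tailR FIAstar x = (H' x).toReal / Θstar := by
    intro x hx
    have h := hF2 x (by linarith)
    have h2 := ha2 x (by linarith)
    rcases min_choice 1 ((H' x).toReal / Θstar) with h3 | h3
    · linarith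
    · rw [h, h3]
  have hLong : IsLongTailed FIA → IsLongTailed FIAstar ∧ ∃ C : ℝ, 0 < C ∧
      (∀ x, x0 ≤ x → tailR FIAstar x ≤ C * tailR FIA x) ∧
      (∀ x, x0 ≤ x → tailR FIA x ≤ C * tailR FIAstar x) := by
    intro hL
    have hfin : ∀ x, x0 ≤ x → H x ≠ ⊤ := by
      intro x hx htop
      have h1 := hG1 x hx
      have h2 := (aux_tail_pos FIA x).2 (hL.1 x)
      rw [htop] at h1
      simp at h1
      linarith
    have hfin' : ∀ x, x0 ≤ x → H' x ≠ ⊤ := by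
      intro x hx
      exact ne_top_of_le_ne_top (hfin x hx) (hle1 x (by linarith))
    set C : ℝ := Θ / Θstar + K * (Θstar / Θ) with hCdef
    have hC : 0 < C := by positivity
    have b1 : ∀ x, x0 ≤ x → tailR FIAstar x ≤ C * tailR FIA x := by
      intro x hx
      rw [hG1 x hx, hG2 x hx]
      have h1 := ENNReal.toReal_mono (hfin x hx) (hle1 x (by linarith))
      have h2 : 0 ≤ (H x).toReal := ENNReal.toReal_nonneg
      calc (H' x).toReal / Θstar ≤ (H x).toReal / Θstar := by gcongr
        _ = Θ / Θstar * ((H x).toReal / Θ) := by field_simp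
        _ ≤ C * ((H x).toReal / Θ) := by
          apply mul_le_mul_of_nonneg_right _ (by positivity)
          rw [hCdef]
          have : 0 ≤ K * (Θstar / Θ) := by positivity
          linarith
    have b2 : ∀ x, x0 ≤ x → tailR FIA x ≤ C * tailR FIAstar x := by
      intro x hx
      rw [hG1 x hx, hG2 x hx]
      have h1 := ENNReal.toReal_mono
        (ENNReal.mul_ne_top ENNReal.ofReal_ne_top (hfin' x hx)) (hle2 x (by linarith))
      rw [ENNReal.toReal_mul, ENNReal.toReal_ofReal hK.le] at h1
      have h2 : 0 ≤ (H' x).toReal := ENNReal.toReal_nonneg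
      calc (H x).toReal / Θ ≤ (K * (H' x).toReal) / Θ := by gcongr
        _ = K * (Θstar / Θ) * ((H' x).toReal / Θstar) := by field_simp
        _ ≤ C * ((H' x).toReal / Θstar) := by
          apply mul_le_mul_of_nonneg_right _ (by positivity)
          rw [hCdef]
          have : 0 ≤ Θ / Θstar := by positivity
          linarith
    refine ⟨long_transfer FIA FIAstar hL C hC x0 b1 b2 ?_, C, hC, b1, b2⟩
    intro t y ht hy
    filter_upwards [eventually_ge_atTop (x0 + (t + y))] with x hx
    have hxa : x0 ≤ x - (t + y) := by linarith
    have hxb : x0 ≤ x - t := by linarith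
    have hxc : x0 ≤ x := by linarith
    rw [hG2 _ hxa, hG2 _ hxb, hG2 _ hxc]
    have hty : 0 < t + y := by linarith
    have hb : x - t = t / (t + y) * (x - (t + y)) + y / (t + y) * x := by
      field_simp
      ring
    have hconv : H' (x - t) ≤ ENNReal.ofReal (t / (t + y)) * H' (x - (t + y)) +
        ENNReal.ofReal (y / (t + y)) * H' x := by
      have m1 := (aux_fubini P hA X hXmeas cstar (show 0 < x - (t + y) by linarith)).2
      have m2 := (aux_fubini P hA X hXmeas cstar (show 0 < x by linarith)).2
      rw [hH']
      simp only
      rw [← lintegral_const_mul _ m1, ← lintegral_const_mul _ m2,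
        ← lintegral_add_left (m1.const_mul _)]
      apply lintegral_mono
      intro ω
      simp only
      rw [hb]
      exact aux_len_convex hA hc' (by linarith) (by linarith) (by positivity) (by positivity)
        (by field_simp) (X ω)
    have hr := ENNReal.toReal_mono (ENNReal.add_ne_top.2
      ⟨ENNReal.mul_ne_top ENNReal.ofReal_ne_top (hfin' _ hxa),
       ENNReal.mul_ne_top ENNReal.ofReal_ne_top (hfin' _ hxc)⟩) hconv
    rw [ENNReal.toReal_add (ENNReal.mul_ne_top ENNReal.ofReal_ne_top (hfin' _ hxa))
      (ENNReal.mul_ne_top ENNReal.ofReal_ne_top (hfin' _ hxc)), ENNReal.toReal_mul,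
      ENNReal.toReal_mul, ENNReal.toReal_ofReal (by positivity),
      ENNReal.toReal_ofReal (by positivity)] at hr
    have hn : 0 ≤ (H' (x - t)).toReal := ENNReal.toReal_nonneg
    set p := (H' (x - t)).toReal
    set q := (H' (x - (t + y))).toReal
    set r := (H' x).toReal
    have hr2 : (t + y) * p ≤ t * q + y * r := by
      calc (t + y) * p ≤ (t + y) * (t / (t + y) * q + y / (t + y) * r) :=
            mul_le_mul_of_nonneg_left hr hty.le
        _ = _ := by field_simp
    have hr3 : p - r ≤ t / y * q := by
      rw [div_mul_eq_mul_div, le_div_iff₀ hy]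
      nlinarith
    calc p / Θstar - r / Θstar = (p - r) / Θstar := by ring
      _ ≤ (t / y * q) / Θstar := by gcongr
      _ = t / y * (q / Θstar) := by ring
  refine ⟨fun hS => ?_, fun hL => (hLong hL).1⟩
  obtain ⟨hL', C, hC, b1, b2⟩ := hLong (sub_long FIA hS)
  refine sub_transfer FIA FIAstar hS hL' ?_ C hC x0 b1 b2
  have h0 := (prob_compl_eq_zero_iff (μ := FIAstar) (measurableSet_Ioi (a := (0:ℝ)))).2
    (hZ2 0 le_rfl)
  rw [compl_Ioi] at h0
  exact measure_mono_null Iio_subset_Iic_self h0
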